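/- Let λ be a Dyck word of semilength n and let λ̄ be its mirror image, the Dyck word defined by λ̄_i := U if λ_{2n+1−i} = D and λ̄_i := D if λ_{2n+1−i} = U. Then the LS generating polynomials agree: P_λ = P_{λ̄} in ℤ[q]. -/

import Mathlib

/-!
Dyck words, chords, nesting, capacities and Lascoux–Schützenberger labellings.
A step is a `Bool`: `true` = U (up), `false` = D (down).
-/

open scoped BigOperators Classical

noncomputable section

/-- The height (#U − #D) of the prefix of length `k`. -/
def heightAt (l : List Bool) (k : ℕ) : ℤ :=
  ((l.take k).count true : ℤ) - ((l.take k).count false : ℤ)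

/-- `l` is a Dyck word: equally many U's and D's, and every prefix has at least
as many U's as D's. -/
def IsDyckWord (l : List Bool) : Prop :=
  l.count true = l.count false ∧
    ∀ k, (l.take k).count false ≤ (l.take k).count true

/-- `(i,j)` is a chord of `l` (0-indexed matched pair of a U at `i` and a D at `j`
under the standard parenthesis matching). -/
def IsChord (l : List Bool) (i j : ℕ) : Prop :=
  i < j ∧ j < l.length ∧ l.getD i false = true ∧ l.getD j true = false ∧
    heightAt l (j + 1) = heightAt l i ∧
    ∀ k ∈ Finset.Icc (i + 1) j, heightAt l i < heightAt l k

/-- The finset of chords of `l`. -/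
def chords (l : List Bool) : Finset (ℕ × ℕ) :=
  (Finset.range l.length ×ˢ Finset.range l.length).filter fun p => IsChord l p.1 p.2

/-- `c' = (i',j')` is nested in `c = (i,j)` iff `i < i' < j' < j`. -/
def NestedIn (c' c : ℕ × ℕ) : Prop :=
  c.1 < c'.1 ∧ c'.1 < c'.2 ∧ c'.2 < c.2

/-- The length `l(c)` of a chord: one plus the number of chords nested in it. -/
def chordLen (l : List Bool) (c : ℕ × ℕ) : ℕ :=
  1 + ((chords l).filter fun c' => NestedIn c' c).card

/-- The capacity of a chord: the number of D's strictly before its opening position. -/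
def cap (l : List Bool) (c : ℕ × ℕ) : ℕ := (l.take c.1).count false

/-- LS-labellings of `l`: functions on chords (encoded as functions on `ℕ × ℕ`
vanishing off the chords) which weakly increase under nesting and are bounded by
the capacity on leaf chords. -/
def LSLabellings (l : List Bool) : Set ((ℕ × ℕ) → ℕ) :=
  {f | (∀ c, c ∉ chords l → f c = 0) ∧
       (∀ c ∈ chords l, ∀ c' ∈ chords l, NestedIn c' c → f c ≤ f c') ∧
       (∀ c ∈ chords l, (∀ c' ∈ chords l, ¬ NestedIn c' c) → f c ≤ cap l c)}

/-- The quantum integer [n] = 1 + q + ⋯ + q^{n-1} in ℤ[q]. -/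
def qintP (n : ℕ) : Polynomial ℤ := ∑ i ∈ Finset.range n, Polynomial.X ^ i

/-- The quantum factorial [n]! = [1][2]⋯[n] in ℤ[q]. -/
def qfactP (n : ℕ) : Polynomial ℤ := ∏ i ∈ Finset.range n, qintP (i + 1)

/-- The LS generating polynomial P_λ = Σ_f q^{Σ_c f(c)} ∈ ℤ[q], summed over all
LS-labellings f of λ. -/
def PLS (l : List Bool) : Polynomial ℤ :=
  ∑ᶠ f ∈ LSLabellings l, Polynomial.X ^ (∑ c ∈ chords l, f c)

/-!
The hook formula `∏ c, [l(c)] * P_λ = [n]!` determines `P_λ`, and its left factor is visibly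
invariant under mirroring. To prove it by induction on Dyck words, all bounds are raised by an
arbitrary constant `k`, so that the right side becomes `[k + 1] ⋯ [k + n]`:
* in a concatenation, the first word raises the capacities of the second by its semilength;
* below a root chord on `m` others, subtracting `1` from all labels when the root label is positive
  gives a recursion in `k`, which is solved by `[m + 1] + q ^ (m + 1) [k + 1] = [m + k + 2]`.

The bound on leaf chords propagates to all chords: a chord that is not a leaf starts with `UU`,
and the chord opened by the second `U` is nested in it and has the same capacity.
-/

open Finset Polynomial

/-! ### Quantum integers -/

theorem qintP_add (m k : ℕ) : qintP (m + k) = qintP m + X ^ m * qintP k := by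
  simp only [qintP, sum_range_add, pow_add, mul_sum]

theorem qintP_succ_ne_zero (n : ℕ) : qintP (n + 1) ≠ 0 := by
  intro h
  have eval_one : ((n : ℤ) + 1) = 0 := by
    simpa [qintP, eval_finsetSum] using congrArg (eval 1) h
  omega

/-- The rising quantum factorial `[k + 1][k + 2] ⋯ [k + n]`. -/
def qAscFactP (k n : ℕ) : ℤ[X] := ∏ i ∈ range n, qintP (k + i + 1)

theorem qAscFactP_zero_left (n : ℕ) : qAscFactP 0 n = qfactP n := by
  simp only [qAscFactP, qfactP, zero_add]

theorem qAscFactP_succ (k n : ℕ) : qAscFactP k (n + 1) = qAscFactP k n * qintP (k + n + 1) :=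
  prod_range_succ _ _

theorem qAscFactP_succ' (k n : ℕ) :
    qAscFactP k (n + 1) = qAscFactP (k + 1) n * qintP (k + 1) := by
  simp only [qAscFactP, prod_range_succ', add_zero, add_right_comm k _ 1, ← add_assoc]

theorem qAscFactP_add (k m n : ℕ) :
    qAscFactP k (m + n) = qAscFactP k m * qAscFactP (k + m) n := by
  simp only [qAscFactP, prod_range_add, ← add_assoc]

/-! ### Bounded labellings -/

section Labellings

variable {α β : Type*} {r : α → α → Prop} {s : β → β → Prop} {C D : Finset α} {g g' f f' : α → ℕ}

/-- `f` is a labelling of `C` (extended by zero) which is bounded by `g` and weakly increases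
from `c` to `c'` when `r c' c`; on chords, `r` is `NestedIn`. -/
structure IsBoundedLabelling (r : α → α → Prop) (C : Finset α) (g f : α → ℕ) : Prop where
  eq_zero : ∀ c ∉ C, f c = 0
  le_of_rel : ∀ c ∈ C, ∀ c' ∈ C, r c' c → f c ≤ f c'
  le_bound : ∀ c ∈ C, f c ≤ g c

theorem finite_setOf_isBoundedLabelling (r : α → α → Prop) (C : Finset α) (g : α → ℕ) :
    {f | IsBoundedLabelling r C g f}.Finite := by
  have restrict_injOn :
      Set.InjOn (fun (f : α → ℕ) (c : C) => f c) {f | IsBoundedLabelling r C g f} := by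
    intro f hf f' hf' h
    funext c
    by_cases hc : c ∈ C
    · exact congrFun h ⟨c, hc⟩
    · rw [hf.eq_zero c hc, hf'.eq_zero c hc]
  refine Set.Finite.of_finite_image ((Set.finite_Iic fun c : C => g c).subset ?_) restrict_injOn
  rintro _ ⟨f, hf, rfl⟩ c
  exact hf.le_bound c c.2

/-- The finite set of labellings of `C` bounded by `g`. -/
def boundedLabellings (r : α → α → Prop) (C : Finset α) (g : α → ℕ) : Finset (α → ℕ) :=
  (finite_setOf_isBoundedLabelling r C g).toFinset

theorem mem_boundedLabellings : f ∈ boundedLabellings r C g ↔ IsBoundedLabelling r C g f := by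
  simp only [boundedLabellings, Set.Finite.mem_toFinset, Set.mem_ofPred_eq]

/-- The generating polynomial of the labellings of `C` bounded by `g`. -/
def labellingPoly (r : α → α → Prop) (C : Finset α) (g : α → ℕ) : ℤ[X] :=
  ∑ f ∈ boundedLabellings r C g, X ^ ∑ c ∈ C, f c

theorem IsBoundedLabelling.congr (hf : IsBoundedLabelling r C g f) (h : ∀ c ∈ C, g c = g' c) :
    IsBoundedLabelling r C g' f :=
  ⟨hf.eq_zero, hf.le_of_rel, fun c hc => (hf.le_bound c hc).trans_eq (h c hc)⟩

theorem labellingPoly_congr (h : ∀ c ∈ C, g c = g' c) :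
    labellingPoly r C g = labellingPoly r C g' := by
  have : boundedLabellings r C g = boundedLabellings r C g' := by
    ext f
    simp only [mem_boundedLabellings]
    exact ⟨fun hf => hf.congr h, fun hf => hf.congr fun c hc => (h c hc).symm⟩
  rw [labellingPoly, labellingPoly, this]

theorem labellingPoly_empty : labellingPoly r ∅ g = 1 := by
  have : boundedLabellings r ∅ g = {0} := by
    ext f
    rw [mem_boundedLabellings, mem_singleton]
    refine ⟨fun hf => funext fun c => hf.eq_zero c (notMem_empty c), ?_⟩
    rintro rfl
    constructor <;> simp
  simp [labellingPoly, this]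

theorem IsBoundedLabelling.comp_relEmbedding {g f : β → ℕ} (e : r ↪r s)
    (hf : IsBoundedLabelling s (C.map e.toEmbedding) g f) :
    IsBoundedLabelling r C (g ∘ e) (f ∘ e) where
  eq_zero c hc := hf.eq_zero _ (by simpa using hc)
  le_of_rel c hc c' hc' h :=
    hf.le_of_rel _ (mem_map_of_mem _ hc) _ (mem_map_of_mem _ hc') (e.map_rel_iff.2 h)
  le_bound c hc := hf.le_bound _ (mem_map_of_mem _ hc)

theorem IsBoundedLabelling.extend {g : β → ℕ} (e : r ↪r s)
    (hf : IsBoundedLabelling r C (g ∘ e) f) :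
    IsBoundedLabelling s (C.map e.toEmbedding) g (Function.extend e f 0) where
  eq_zero b hb := by
    by_cases h : ∃ c, e c = b
    · obtain ⟨c, rfl⟩ := h
      rw [e.injective.extend_apply]
      exact hf.eq_zero c fun hc => hb (mem_map_of_mem e.toEmbedding hc)
    · exact Function.extend_apply' _ _ _ h
  le_of_rel := by
    simpa [e.injective.extend_apply, e.map_rel_iff] using hf.le_of_rel
  le_bound := by
    simpa [e.injective.extend_apply] using hf.le_bound

theorem labellingPoly_map (e : r ↪r s) (C : Finset α) (g : β → ℕ) :
    labellingPoly s (C.map e.toEmbedding) g = labellingPoly r C (g ∘ e) := by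
  refine sum_nbij' (fun f => f ∘ e) (fun f => Function.extend e f 0) ?_ ?_ ?_ ?_ ?_ <;>
    simp only [mem_boundedLabellings]
  · exact fun f hf => hf.comp_relEmbedding e
  · exact fun f hf => hf.extend e
  · intro f hf
    funext b
    by_cases h : ∃ c, e c = b
    · obtain ⟨c, rfl⟩ := h
      exact e.injective.extend_apply _ _ _
    · rw [Function.extend_apply' _ _ _ h, hf.eq_zero b, Pi.zero_apply]
      rintro hb
      obtain ⟨c, -, rfl⟩ := mem_map.1 hb
      exact h ⟨c, rfl⟩
  · exact fun f _ => funext fun c => e.injective.extend_apply f 0 c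
  · simp

theorem IsBoundedLabelling.restrict [DecidableEq α] (hf : IsBoundedLabelling r D g f)
    (hCD : C ⊆ D) :
    IsBoundedLabelling r C g (C.piecewise f 0) where
  eq_zero c hc := by simp [hc]
  le_of_rel c hc c' hc' h := by simpa [hc, hc'] using hf.le_of_rel c (hCD hc) c' (hCD hc') h
  le_bound c hc := by simpa [hc] using hf.le_bound c (hCD hc)

theorem IsBoundedLabelling.piecewise_union [DecidableEq α] (hf : IsBoundedLabelling r C g f)
    (hf' : IsBoundedLabelling r D g f') (hCD : Disjoint C D)
    (hr : ∀ c ∈ C, ∀ d ∈ D, ¬ r c d ∧ ¬ r d c) :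
    IsBoundedLabelling r (C ∪ D) g (C.piecewise f f') where
  eq_zero c hc := by
    rw [notMem_union] at hc
    rw [piecewise_eq_of_notMem _ _ _ hc.1, hf'.eq_zero c hc.2]
  le_of_rel c hc c' hc' h := by
    have notMem_left : ∀ d ∈ D, d ∉ C := fun _ hd => disjoint_right.1 hCD hd
    rcases mem_union.1 hc with hc | hc <;> rcases mem_union.1 hc' with hc' | hc'
    · simpa [hc, hc'] using hf.le_of_rel c hc c' hc' h
    · exact absurd h (hr c hc c' hc').2
    · exact absurd h (hr c' hc' c hc).1
    · simpa [notMem_left c hc, notMem_left c' hc'] using hf'.le_of_rel c hc c' hc' h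
  le_bound c hc := by
    by_cases hcC : c ∈ C
    · simpa [hcC] using hf.le_bound c hcC
    · simpa [hcC] using hf'.le_bound c ((mem_union.1 hc).resolve_left hcC)

theorem labellingPoly_union [DecidableEq α] (hCD : Disjoint C D)
    (hr : ∀ c ∈ C, ∀ d ∈ D, ¬ r c d ∧ ¬ r d c) :
    labellingPoly r (C ∪ D) g = labellingPoly r C g * labellingPoly r D g := by
  have notMem_left : ∀ d ∈ D, d ∉ C := fun _ hd => disjoint_right.1 hCD hd
  rw [labellingPoly, labellingPoly, labellingPoly, sum_mul_sum, ← sum_product']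
  refine sum_nbij' (fun f => (C.piecewise f 0, D.piecewise f 0)) (fun p => C.piecewise p.1 p.2)
    ?_ ?_ ?_ ?_ ?_ <;>
    simp only [mem_product, mem_boundedLabellings, Prod.forall, and_imp]
  · exact fun f hf => ⟨hf.restrict subset_union_left, hf.restrict subset_union_right⟩
  · exact fun f f' hf hf' => hf.piecewise_union hf' hCD hr
  · intro f hf
    funext c
    by_cases hC : c ∈ C
    · simp [hC]
    by_cases hD : c ∈ D
    · simp [hC, hD]
    · simp [hC, hD, hf.eq_zero c]
  · intro f f' hf hf'
    refine Prod.ext (funext fun c => ?_) (funext fun c => ?_)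
    · by_cases hC : c ∈ C <;> simp [hC, hf.eq_zero]
    · by_cases hD : c ∈ D <;> simp [hD, notMem_left, hf'.eq_zero]
  · intro f _
    rw [← pow_add, sum_union hCD]
    congr 2 <;> exact sum_congr rfl fun c hc => (piecewise_eq_of_mem _ _ _ hc).symm

theorem IsBoundedLabelling.sub_one (hf : IsBoundedLabelling r C (fun c => g c + 1) f) :
    IsBoundedLabelling r C g fun c => f c - 1 where
  eq_zero c hc := by simp [hf.eq_zero c hc]
  le_of_rel c hc c' hc' h := Nat.sub_le_sub_right (hf.le_of_rel c hc c' hc' h) 1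
  le_bound c hc := Nat.sub_le_of_le_add (hf.le_bound c hc)

theorem IsBoundedLabelling.add_one [DecidableEq α] (hf : IsBoundedLabelling r C g f) :
    IsBoundedLabelling r C (fun c => g c + 1) (C.piecewise (f + 1) 0) where
  eq_zero c hc := by simp [hc]
  le_of_rel c hc c' hc' h := by simpa [hc, hc'] using hf.le_of_rel c hc c' hc' h
  le_bound c hc := by simpa [hc] using hf.le_bound c hc

section Root

variable [DecidableEq α] {root : α}

theorem filter_boundedLabellings_insert_eq_zero (hroot : root ∉ C) (hr : ∀ c ∈ C, ¬ r root c) :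
    {f ∈ boundedLabellings r (insert root C) g | f root = 0} = boundedLabellings r C g := by
  ext f
  simp only [mem_filter, mem_boundedLabellings]
  constructor
  · rintro ⟨hf, hf0⟩
    refine ⟨fun c hc => ?_,
      fun c hc c' hc' => hf.le_of_rel c (mem_insert_of_mem hc) c' (mem_insert_of_mem hc'),
      fun c hc => hf.le_bound c (mem_insert_of_mem hc)⟩
    obtain rfl | hne := eq_or_ne c root
    · exact hf0
    · exact hf.eq_zero c (by simp [hne, hc])
  · intro hf
    have hf0 : f root = 0 := hf.eq_zero root hroot
    refine ⟨⟨fun c hc => hf.eq_zero c fun h => hc (mem_insert_of_mem h), ?_, ?_⟩, hf0⟩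
    · simp only [forall_mem_insert, hf0, zero_le, implies_true, true_and]
      exact fun c hc => ⟨fun h => absurd h (hr c hc), hf.le_of_rel c hc⟩
    · simpa [hf0] using hf.le_bound

theorem IsBoundedLabelling.sum_insert (hf : IsBoundedLabelling r C g f) (hroot : root ∉ C) :
    ∑ c ∈ insert root C, f c = ∑ c ∈ C, f c := by
  rw [Finset.sum_insert hroot, hf.eq_zero root hroot, zero_add]

theorem labellingPoly_insert_of_bound_eq_zero (hroot : root ∉ C) (hr : ∀ c ∈ C, ¬ r root c)
    (hg : g root = 0) : labellingPoly r (insert root C) g = labellingPoly r C g := by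
  have root_label_eq_zero : ∀ f ∈ boundedLabellings r (insert root C) g, f root = 0 := by
    intro f hf
    have := (mem_boundedLabellings.1 hf).le_bound root (mem_insert_self _ _)
    omega
  rw [labellingPoly, ← filter_true_of_mem root_label_eq_zero,
    filter_boundedLabellings_insert_eq_zero hroot hr]
  exact sum_congr rfl fun f hf => by rw [(mem_boundedLabellings.1 hf).sum_insert hroot]

theorem IsBoundedLabelling.pos_of_root_pos (hr : ∀ c ∈ C, r c root)
    (hf : IsBoundedLabelling r (insert root C) g f) (hpos : f root ≠ 0) :
    ∀ c ∈ insert root C, 1 ≤ f c := by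
  have one_le : 1 ≤ f root := Nat.one_le_iff_ne_zero.2 hpos
  simp only [forall_mem_insert]
  exact ⟨one_le, fun c hc => one_le.trans
    (hf.le_of_rel root (mem_insert_self _ _) c (mem_insert_of_mem hc) (hr c hc))⟩

theorem sum_labellings_insert_root_ne_zero (hr : ∀ c ∈ C, r c root) :
    ∑ f ∈ boundedLabellings r (insert root C) (fun c => g c + 1) with f root ≠ 0,
        (X : ℤ[X]) ^ ∑ c ∈ insert root C, f c =
      X ^ #(insert root C) * labellingPoly r (insert root C) g := by
  rw [labellingPoly, mul_sum]
  refine sum_nbij' (fun f c => f c - 1) (fun f => (insert root C).piecewise (f + 1) 0)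
    ?_ ?_ ?_ ?_ ?_ <;>
    simp only [mem_filter, mem_boundedLabellings, and_imp]
  · exact fun f hf _ => hf.sub_one
  · exact fun f hf => ⟨hf.add_one, by simp⟩
  · intro f hf hpos
    funext c
    by_cases hc : c ∈ insert root C
    · rw [piecewise_eq_of_mem _ _ _ hc]
      exact Nat.sub_add_cancel (hf.pos_of_root_pos hr hpos c hc)
    · rw [piecewise_eq_of_notMem _ _ _ hc, hf.eq_zero c hc, Pi.zero_apply]
  · intro f hf
    funext c
    by_cases hc : c ∈ insert root C
    · rw [piecewise_eq_of_mem _ _ _ hc]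
      exact Nat.add_sub_cancel (f c) 1
    · rw [piecewise_eq_of_notMem _ _ _ hc, hf.eq_zero c hc, Pi.zero_apply, Nat.zero_sub]
  · intro f hf hpos
    rw [← pow_add, card_eq_sum_ones, ← sum_add_distrib]
    congr 1
    exact sum_congr rfl fun c hc => (Nat.add_sub_cancel' (hf.pos_of_root_pos hr hpos c hc)).symm

theorem labellingPoly_insert_bound_add_one (hroot : root ∉ C)
    (hr : ∀ c ∈ C, r c root ∧ ¬ r root c) :
    labellingPoly r (insert root C) (fun c => g c + 1) =
      labellingPoly r C (fun c => g c + 1) +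
        X ^ (#C + 1) * labellingPoly r (insert root C) g := by
  rw [labellingPoly, ← sum_filter_add_sum_filter_not _ fun f => f root = 0,
    filter_boundedLabellings_insert_eq_zero hroot fun c hc => (hr c hc).2,
    sum_labellings_insert_root_ne_zero fun c hc => (hr c hc).1, card_insert_of_notMem hroot]
  congr 1
  exact sum_congr rfl fun f hf => by rw [(mem_boundedLabellings.1 hf).sum_insert hroot]

end Root

/-! ### The hook formula -/

/-- The product over `c ∈ C` of the quantum hook lengths `[1 + #{c' ∈ C | r c' c}]`; on the chords
of a word the hook length is `chordLen`. -/
def hookProd (r : α → α → Prop) (C : Finset α) : ℤ[X] :=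
  ∏ c ∈ C, qintP (1 + #{c' ∈ C | r c' c})

theorem hookProd_ne_zero (r : α → α → Prop) (C : Finset α) : hookProd r C ≠ 0 :=
  prod_ne_zero_iff.2 fun c _ => by rw [add_comm]; exact qintP_succ_ne_zero _

theorem hookProd_map (e : r ↪r s) (C : Finset α) :
    hookProd s (C.map e.toEmbedding) = hookProd r C := by
  simp only [hookProd, prod_map, filter_map, card_map]
  simp only [Function.comp_def, RelEmbedding.coe_toEmbedding, e.map_rel_iff]

theorem hookProd_union [DecidableEq α] (hCD : Disjoint C D)
    (hr : ∀ c ∈ C, ∀ d ∈ D, ¬ r c d ∧ ¬ r d c) :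
    hookProd r (C ∪ D) = hookProd r C * hookProd r D := by
  rw [hookProd, prod_union hCD, hookProd, hookProd]
  congr 1 <;> refine prod_congr rfl fun c hc => ?_ <;> rw [filter_union]
  · rw [filter_false_of_mem (s := D) fun d hd => (hr c hc d hd).2, union_empty]
  · rw [filter_false_of_mem (s := C) fun d hd => (hr d hd c hc).1, empty_union]

theorem hookProd_insert [DecidableEq α] {root : α} (hroot : root ∉ C) (hirr : ¬ r root root)
    (hr : ∀ c ∈ C, r c root ∧ ¬ r root c) :
    hookProd r (insert root C) = hookProd r C * qintP (#C + 1) := by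
  rw [hookProd, prod_insert hroot, filter_insert, if_neg hirr,
    filter_true_of_mem fun c hc => (hr c hc).1, mul_comm, add_comm 1, hookProd]
  congr 1
  exact prod_congr rfl fun c hc => by rw [filter_insert, if_neg (hr c hc).2]

/-- The hook formula for the labellings of `C`, at all uniform enlargements of the bound `g`. -/
def HookFormula (r : α → α → Prop) (C : Finset α) (g : α → ℕ) : Prop :=
  ∀ k, hookProd r C * labellingPoly r C (fun c => g c + k) = qAscFactP k #C

namespace HookFormula

theorem empty : HookFormula r ∅ g := fun k => by
  simp [hookProd, labellingPoly_empty, qAscFactP]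

theorem map {g : β → ℕ} (e : r ↪r s) (h : HookFormula r C (g ∘ e)) :
    HookFormula s (C.map e.toEmbedding) g := fun k => by
  rw [hookProd_map, labellingPoly_map, card_map]
  exact h k

theorem congr (h : HookFormula r C g) (hg : ∀ c ∈ C, g c = g' c) : HookFormula r C g' :=
  fun k => by
    rw [← h k, labellingPoly_congr fun c hc => congrArg (· + k) (hg c hc).symm]

theorem bound_add (h : HookFormula r C g) (m k : ℕ) :
    hookProd r C * labellingPoly r C (fun c => g c + m + k) = qAscFactP (k + m) #C := by
  simpa only [add_assoc, add_comm k] using h (m + k)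

theorem union [DecidableEq α] (hC : HookFormula r C g) (hD : HookFormula r D g')
    (hg : ∀ d ∈ D, g d = g' d + #C) (hCD : Disjoint C D)
    (hr : ∀ c ∈ C, ∀ d ∈ D, ¬ r c d ∧ ¬ r d c) : HookFormula r (C ∪ D) g := fun k => by
  rw [hookProd_union hCD hr, labellingPoly_union hCD hr, card_union_of_disjoint hCD,
    qAscFactP_add, mul_mul_mul_comm, hC k, ← hD.bound_add,
    labellingPoly_congr fun d hd => congrArg (· + k) (hg d hd)]

theorem insert_root [DecidableEq α] {root : α} (h : HookFormula r C g) (hroot : root ∉ C)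
    (hirr : ¬ r root root) (hr : ∀ c ∈ C, r c root ∧ ¬ r root c) (hg : g root = 0) :
    HookFormula r (insert root C) g := by
  intro k
  rw [hookProd_insert hroot hirr hr, card_insert_of_notMem hroot]
  induction k with
  | zero =>
    rw [labellingPoly_insert_of_bound_eq_zero hroot (fun c hc => (hr c hc).2) (by simpa using hg),
      mul_right_comm, h 0, qAscFactP_succ, zero_add]
  | succ k ih =>
    calc hookProd r C * qintP (#C + 1) *
          labellingPoly r (insert root C) (fun c => g c + (k + 1))
        = qintP (#C + 1) * (hookProd r C * labellingPoly r C (fun c => g c + (k + 1))) +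
            X ^ (#C + 1) * (hookProd r C * qintP (#C + 1) *
              labellingPoly r (insert root C) (fun c => g c + k)) := by
          simp only [← add_assoc, labellingPoly_insert_bound_add_one hroot hr]
          ring
      _ = qintP (#C + 1) * qAscFactP (k + 1) #C +
            X ^ (#C + 1) * (qAscFactP (k + 1) #C * qintP (k + 1)) := by
          rw [h, ih, qAscFactP_succ']
      _ = qAscFactP (k + 1) #C * (qintP (#C + 1) + X ^ (#C + 1) * qintP (k + 1)) := by ring
      _ = qAscFactP (k + 1) (#C + 1) := by
          rw [← qintP_add, qAscFactP_succ]
          congr 2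
          omega

end HookFormula

end Labellings

/-! ### Heights, chords and capacities -/

section Chords

variable {l a b : List Bool} {i j k : ℕ} {c : ℕ × ℕ}

theorem heightAt_zero (l : List Bool) : heightAt l 0 = 0 := by
  simp [heightAt]

theorem heightAt_append_left (b : List Bool) (hk : k ≤ a.length) :
    heightAt (a ++ b) k = heightAt a k := by
  rw [heightAt, heightAt, List.take_append_of_le_length hk]

theorem heightAt_append_right (a b : List Bool) (k : ℕ) :
    heightAt (a ++ b) (k + a.length) = heightAt a a.length + heightAt b k := by
  simp only [heightAt, add_comm k, List.take_length_add_append, List.take_length, List.count_append,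
    Nat.cast_add]
  ring

theorem heightAt_succ_of_up (hk : l.getD k false = true) :
    heightAt l (k + 1) = heightAt l k + 1 := by
  rcases lt_or_ge k l.length with hlt | hge
  · rw [List.getD_eq_getElem _ _ hlt] at hk
    simp only [heightAt, List.take_add_one, List.getElem?_eq_getElem hlt, hk]
    rw [List.count_append, List.count_append]
    simp [add_sub_right_comm]
  · simp [hge] at hk

theorem heightAt_succ_of_down (hk : l.getD k true = false) :
    heightAt l (k + 1) = heightAt l k - 1 := by
  rcases lt_or_ge k l.length with hlt | hge
  · rw [List.getD_eq_getElem _ _ hlt] at hk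
    simp only [heightAt, List.take_add_one, List.getElem?_eq_getElem hlt, hk]
    rw [List.count_append, List.count_append]
    simp [sub_add_eq_sub_sub]
  · simp [hge] at hk

theorem mem_chords : (i, j) ∈ chords l ↔ IsChord l i j := by
  simp only [chords, mem_filter, mem_product, mem_range, and_iff_right_iff_imp]
  exact fun h => ⟨h.1.trans h.2.1, h.2.1⟩

theorem fst_le_length_of_mem_chords (hc : c ∈ chords l) : c.1 ≤ l.length :=
  ((mem_chords.1 hc).1.trans (mem_chords.1 hc).2.1).le

theorem isChord_append_left (b : List Bool) (hj : j < a.length) :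
    IsChord (a ++ b) i j ↔ IsChord a i j := by
  unfold IsChord
  refine and_congr_right fun hij => ?_
  have heights : (∀ k ∈ Icc (i + 1) j, heightAt a i < heightAt (a ++ b) k) ↔
      ∀ k ∈ Icc (i + 1) j, heightAt a i < heightAt a k :=
    forall₂_congr fun k hk => by
      rw [heightAt_append_left b ((mem_Icc.1 hk).2.trans hj.le)]
  rw [List.getD_append _ _ _ _ (hij.trans hj), List.getD_append _ _ _ _ hj,
    heightAt_append_left b hj, heightAt_append_left b (hij.trans hj).le, heights]
  simp only [List.length_append, hj, Nat.lt_add_right, true_and]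

theorem isChord_append_right (a b : List Bool) (i j : ℕ) :
    IsChord (a ++ b) (i + a.length) (j + a.length) ↔ IsChord b i j := by
  have heights : (∀ k ∈ Icc (i + a.length + 1) (j + a.length),
        heightAt (a ++ b) (i + a.length) < heightAt (a ++ b) k) ↔
      ∀ k ∈ Icc (i + 1) j, heightAt b i < heightAt b k := by
    rw [add_right_comm, ← map_add_right_Icc, forall_mem_map]
    simp only [addRightEmbedding_apply, heightAt_append_right, add_lt_add_iff_left]
  have getD (m : ℕ) (x : Bool) : (a ++ b).getD (m + a.length) x = b.getD m x := by
    rw [List.getD_append_right _ _ _ _ (Nat.le_add_left _ _), Nat.add_sub_cancel]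
  unfold IsChord
  rw [heights, getD, getD, add_right_comm j, heightAt_append_right, heightAt_append_right,
    add_right_inj, add_lt_add_iff_right, List.length_append, add_comm a.length,
    add_lt_add_iff_right]

theorem heightAt_nest (hk : k ≤ a.length) :
    heightAt (true :: (a ++ [false])) (k + 1) = heightAt a k + 1 := by
  rw [← heightAt_append_left [false] hk, add_comm (heightAt _ _)]
  exact heightAt_append_right [true] (a ++ [false]) k

theorem isChord_nest_succ (hj : j < a.length) :
    IsChord (true :: (a ++ [false])) (i + 1) (j + 1) ↔ IsChord a i j :=
  (isChord_append_right [true] (a ++ [false]) i j).trans (isChord_append_left [false] hj)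

theorem count_mirror (l : List Bool) (x : Bool) : (l.map not).reverse.count x = l.count !x := by
  rw [List.count_reverse]
  simpa using List.count_map_of_injective l not Bool.not_injective !x

theorem cap_append_left (b : List Bool) (hc : c.1 ≤ a.length) : cap (a ++ b) c = cap a c := by
  rw [cap, cap, List.take_append_of_le_length hc]

/-- Translation of chords by `s` positions. -/
def shiftChord (s : ℕ) : NestedIn ↪r NestedIn where
  toFun c := (c.1 + s, c.2 + s)
  inj' c c' h := by simpa [Prod.ext_iff] using h
  map_rel_iff' {c c'} := by
    change (_ + s < _ + s ∧ _ + s < _ + s ∧ _ + s < _ + s) ↔ _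
    simp only [add_lt_add_iff_right, NestedIn]

theorem cap_append_shiftChord (a b : List Bool) (c : ℕ × ℕ) :
    cap (a ++ b) (shiftChord a.length c) = cap b c + a.count false := by
  change ((a ++ b).take (c.1 + a.length)).count false = (b.take c.1).count false + a.count false
  rw [add_comm c.1, List.take_length_add_append, List.count_append, add_comm]

theorem not_nestedIn_self (c : ℕ × ℕ) : ¬ NestedIn c c := fun h => lt_irrefl _ h.1

theorem nestedIn_root_of_mem_shiftChord_chords :
    ∀ c ∈ (chords a).map (shiftChord 1).toEmbedding,
      NestedIn c (0, a.length + 1) ∧ ¬ NestedIn (0, a.length + 1) c := by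
  simp only [forall_mem_map, Prod.forall, mem_chords]
  exact fun i j h => ⟨⟨Nat.succ_pos i, Nat.succ_lt_succ h.1, Nat.succ_lt_succ h.2.1⟩,
    fun hroot => Nat.not_lt_zero _ hroot.1⟩

theorem root_notMem_shiftChord_chords :
    (0, a.length + 1) ∉ (chords a).map (shiftChord 1).toEmbedding :=
  fun h => not_nestedIn_self _ (nestedIn_root_of_mem_shiftChord_chords _ h).1

theorem snd_lt_fst_of_mem_shiftChord_chords :
    ∀ c ∈ chords a, ∀ d ∈ (chords b).map (shiftChord a.length).toEmbedding, c.2 < d.1 := by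
  simp only [forall_mem_map, Prod.forall, mem_chords]
  exact fun i j h i' _ _ => h.2.1.trans_le (Nat.le_add_left a.length i')

theorem disjoint_chords_shiftChord :
    Disjoint (chords a) ((chords b).map (shiftChord a.length).toEmbedding) :=
  disjoint_left.2 fun _ hc hd =>
    lt_asymm (mem_chords.1 hc).1 (snd_lt_fst_of_mem_shiftChord_chords _ hc _ hd)

theorem not_nestedIn_chords_shiftChord :
    ∀ c ∈ chords a, ∀ d ∈ (chords b).map (shiftChord a.length).toEmbedding,
      ¬ NestedIn c d ∧ ¬ NestedIn d c := by
  intro c hc d hd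
  have hcd := snd_lt_fst_of_mem_shiftChord_chords c hc d hd
  exact ⟨fun ⟨h₁, h₂, _⟩ => by omega, fun ⟨_, h₂, h₃⟩ => by omega⟩

/-! ### Leaf bounds -/

theorem exists_isChord_of_up {q : ℕ} (hup : l.getD i false = true) (hiq : i < q)
    (hq : heightAt l q ≤ heightAt l i) (hlen : q ≤ l.length) : ∃ j < q, IsChord l i j := by
  have returns : ∃ k, i < k ∧ heightAt l k ≤ heightAt l i := ⟨q, hiq, hq⟩
  obtain ⟨hik, hk⟩ := Nat.find_spec returns
  have hkq : Nat.find returns ≤ q := Nat.find_min' returns ⟨hiq, hq⟩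
  have above : ∀ m, i < m → m < Nat.find returns → heightAt l i < heightAt l m :=
    fun m him hm => not_le.1 fun h => Nat.find_min returns hm ⟨him, h⟩
  obtain ⟨j, hj⟩ : ∃ j, Nat.find returns = j + 1 := ⟨Nat.find returns - 1, by omega⟩
  rw [hj] at hik hk hkq above
  have rise := heightAt_succ_of_up hup
  have hij : i < j := by
    refine (Nat.lt_succ_iff.1 hik).lt_of_ne ?_
    rintro rfl
    omega
  have hj_above := above j hij j.lt_succ_self
  have down : l.getD j true = false := by
    by_contra h
    rw [Bool.not_eq_false, List.getD_eq_getElem _ _ (by omega),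
      ← List.getD_eq_getElem _ false] at h
    have := heightAt_succ_of_up h
    omega
  have fall := heightAt_succ_of_down down
  refine ⟨j, hkq, hij, by omega, hup, down, by omega, fun m hm => ?_⟩
  rw [mem_Icc] at hm
  exact above m hm.1 (Nat.lt_succ_of_le hm.2)

theorem IsChord.eq_succ_or_exists_nestedIn (h : IsChord l i j) :
    j = i + 1 ∨ ∃ j', IsChord l (i + 1) j' ∧ NestedIn (i + 1, j') (i, j) := by
  obtain ⟨hij, hjl, hup, hdown, hreturn, habove⟩ := h
  refine or_iff_not_imp_left.2 fun hne => ?_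
  have rise := heightAt_succ_of_up hup
  have fall := heightAt_succ_of_down hdown
  have hup' : l.getD (i + 1) false = true := by
    by_contra h
    rw [Bool.not_eq_true, List.getD_eq_getElem _ _ (by omega),
      ← List.getD_eq_getElem _ true] at h
    have := heightAt_succ_of_down h
    have := habove (i + 1 + 1) (mem_Icc.2 (by omega))
    omega
  obtain ⟨j', hj', hchord⟩ :=
    exists_isChord_of_up hup' (q := j) (by omega) (by omega) hjl.le
  exact ⟨j', hchord, i.lt_succ_self, hchord.1, hj'⟩

theorem IsChord.cap_succ (h : IsChord l i j) (j' : ℕ) : cap l (i + 1, j') = cap l (i, j) := by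
  obtain ⟨hij, hjl, hup, -⟩ := h
  have hil := hij.trans hjl
  rw [List.getD_eq_getElem _ _ hil] at hup
  simp [cap, List.take_add_one, List.getElem?_eq_getElem hil, hup]

theorem mem_LSLabellings_iff {f : ℕ × ℕ → ℕ} :
    f ∈ LSLabellings l ↔ IsBoundedLabelling NestedIn (chords l) (cap l) f := by
  refine ⟨fun ⟨hzero, hmono, hleaf⟩ => ⟨hzero, hmono, ?_⟩,
    fun h => ⟨h.eq_zero, h.le_of_rel, fun c hc _ => h.le_bound c hc⟩⟩
  rintro ⟨i, j⟩ hc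
  induction hn : j - i using Nat.strong_induction_on generalizing i j with
  | h n ih =>
    have hchord := mem_chords.1 hc
    rcases hchord.eq_succ_or_exists_nestedIn with rfl | ⟨j', hchord', hnest⟩
    · refine hleaf _ hc fun c' _ hnest => ?_
      obtain ⟨h₁, h₂, h₃⟩ := hnest
      dsimp only at h₁ h₃
      omega
    · have hc' := mem_chords.2 hchord'
      have smaller : j' - (i + 1) < n := by
        obtain ⟨h₁, h₂, h₃⟩ := hnest
        dsimp only at h₁ h₂ h₃
        omega
      calc f (i, j) ≤ f (i + 1, j') := hmono _ hc _ hc' hnest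
        _ ≤ cap l (i + 1, j') := ih _ smaller _ _ hc' rfl
        _ = cap l (i, j) := hchord.cap_succ j'

theorem PLS_eq_labellingPoly (l : List Bool) :
    PLS l = labellingPoly NestedIn (chords l) (cap l) := by
  have : LSLabellings l = ↑(boundedLabellings NestedIn (chords l) (cap l)) := by
    ext f
    rw [mem_LSLabellings_iff, mem_coe, mem_boundedLabellings]
  rw [PLS, this, finsum_mem_coe_finset, labellingPoly]

end Chords

/-! ### Dyck words -/

/-- The correspondence `U ↔ true`, `D ↔ false` between the steps of Mathlib's `DyckWord` and those
of `IsDyckWord`. -/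
def dyckStepEquivBool : DyckStep ≃ Bool where
  toFun
    | .U => true
    | .D => false
  invFun
    | true => .U
    | false => .D
  left_inv s := by cases s <;> rfl
  right_inv b := by cases b <;> rfl

theorem count_map_dyckStepEquivBool (w : List DyckStep) (s : DyckStep) :
    (w.map dyckStepEquivBool).count (dyckStepEquivBool s) = w.count s :=
  List.count_map_of_injective w _ dyckStepEquivBool.injective s

theorem isDyckWord_map_dyckStepEquivBool_iff (w : List DyckStep) :
    IsDyckWord (w.map dyckStepEquivBool) ↔
      w.count .U = w.count .D ∧ ∀ k, (w.take k).count .D ≤ (w.take k).count .U := by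
  simp only [IsDyckWord, ← List.map_take, ← count_map_dyckStepEquivBool]
  rfl

theorem isDyckWord_map_toList (p : DyckWord) : IsDyckWord (p.toList.map dyckStepEquivBool) :=
  (isDyckWord_map_dyckStepEquivBool_iff _).2 ⟨p.count_U_eq_count_D, p.count_D_le_count_U⟩

theorem map_toList_nest (p : DyckWord) : p.nest.toList.map dyckStepEquivBool =
    true :: (p.toList.map dyckStepEquivBool ++ [false]) := by
  simp [DyckWord.nest, dyckStepEquivBool]

namespace IsDyckWord

variable {l a b : List Bool}

theorem exists_dyckWord (hl : IsDyckWord l) :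
    ∃ p : DyckWord, p.toList.map dyckStepEquivBool = l := by
  obtain ⟨w, rfl⟩ : ∃ w, List.map dyckStepEquivBool w = l :=
    List.map_surjective_iff.2 dyckStepEquivBool.surjective l
  obtain ⟨hcount, hprefix⟩ := (isDyckWord_map_dyckStepEquivBool_iff w).1 hl
  exact ⟨⟨w, hcount, hprefix⟩, rfl⟩

theorem nil : IsDyckWord [] :=
  isDyckWord_map_toList 0

theorem append (ha : IsDyckWord a) (hb : IsDyckWord b) : IsDyckWord (a ++ b) := by
  obtain ⟨p, rfl⟩ := ha.exists_dyckWord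
  obtain ⟨q, rfl⟩ := hb.exists_dyckWord
  rw [← List.map_append]
  exact isDyckWord_map_toList (p + q)

theorem nest (ha : IsDyckWord a) : IsDyckWord (true :: (a ++ [false])) := by
  obtain ⟨p, rfl⟩ := ha.exists_dyckWord
  rw [← map_toList_nest]
  exact isDyckWord_map_toList p.nest

@[elab_as_elim]
theorem induction {motive : (l : List Bool) → IsDyckWord l → Prop} (nil : motive [] nil)
    (nest : ∀ a (ha : IsDyckWord a), motive a ha → motive (true :: (a ++ [false])) ha.nest)
    (append : ∀ a b (ha : IsDyckWord a) (hb : IsDyckWord b),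
      motive a ha → motive b hb → motive (a ++ b) (ha.append hb))
    (hl : IsDyckWord l) : motive l hl := by
  obtain ⟨p, rfl⟩ := hl.exists_dyckWord
  induction hn : p.semilength using Nat.strong_induction_on generalizing p with
  | h n ih =>
    by_cases hp : p = 0
    · subst hp
      exact nil
    have inside := ih _ (hn ▸ p.semilength_insidePart_lt hp) p.insidePart
      (isDyckWord_map_toList _) rfl
    have outside := ih _ (hn ▸ p.semilength_outsidePart_lt hp) p.outsidePart
      (isDyckWord_map_toList _) rfl
    have split : p.toList.map dyckStepEquivBool =
        true :: (p.insidePart.toList.map dyckStepEquivBool ++ [false]) ++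
          p.outsidePart.toList.map dyckStepEquivBool := by
      rw [← map_toList_nest, ← List.map_append]
      exact congrArg (fun q : DyckWord => q.toList.map dyckStepEquivBool)
        (p.nest_insidePart_add_outsidePart hp).symm
    have joined := append _ _ _ _ (nest _ _ inside) outside
    simpa only [← split] using joined

theorem heightAt_nonneg (hl : IsDyckWord l) (k : ℕ) : 0 ≤ heightAt l k :=
  sub_nonneg.2 (Nat.cast_le.2 (hl.2 k))

theorem heightAt_length (hl : IsDyckWord l) : heightAt l l.length = 0 := by
  rw [heightAt, List.take_length, hl.1, sub_self]

theorem chords_append (ha : IsDyckWord a) (b : List Bool) :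
    chords (a ++ b) = chords a ∪ (chords b).map (shiftChord a.length).toEmbedding := by
  ext ⟨i, j⟩
  simp only [mem_union, mem_map, Prod.exists, mem_chords]
  constructor
  · intro h
    rcases lt_or_ge i a.length with hi | hi
    · refine Or.inl ((isChord_append_left b ?_).1 h)
      by_contra! hj
      have := h.2.2.2.2.2 a.length (mem_Icc.2 ⟨hi, hj⟩)
      rw [heightAt_append_left b hi.le, heightAt_append_left b le_rfl, ha.heightAt_length] at this
      exact this.not_ge (ha.heightAt_nonneg i)
    · obtain ⟨i, rfl⟩ := Nat.exists_eq_add_of_le' hi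
      obtain ⟨j, rfl⟩ := Nat.exists_eq_add_of_le' (hi.trans h.1.le)
      exact Or.inr ⟨i, j, (isChord_append_right a b i j).1 h, rfl⟩
  · rintro (h | ⟨i', j', h, heq⟩)
    · exact (isChord_append_left b h.2.1).2 h
    · cases heq
      exact (isChord_append_right a b i' j').2 h

theorem heightAt_nest_length (ha : IsDyckWord a) :
    heightAt (true :: (a ++ [false])) (a.length + 2) = 0 := by
  simpa using ha.nest.heightAt_length

theorem isChord_nest_root (ha : IsDyckWord a) :
    IsChord (true :: (a ++ [false])) 0 (a.length + 1) := by
  refine ⟨Nat.succ_pos _, by simp, by simp, by simp, ?_, fun k hk => ?_⟩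
  · rw [heightAt_zero, ha.heightAt_nest_length]
  · obtain ⟨hpos, hk⟩ := mem_Icc.1 hk
    obtain ⟨k, rfl⟩ := Nat.exists_eq_add_of_le' hpos
    rw [heightAt_zero, zero_add, heightAt_nest (Nat.le_of_succ_le_succ hk)]
    exact Int.lt_add_one_of_le (ha.heightAt_nonneg k)

theorem chords_nest (ha : IsDyckWord a) : chords (true :: (a ++ [false])) =
    insert (0, a.length + 1) ((chords a).map (shiftChord 1).toEmbedding) := by
  ext ⟨i, j⟩
  simp only [mem_insert, mem_map, Prod.exists, mem_chords]
  constructor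
  · intro h
    obtain ⟨hij, hjlen, -, -, hreturn, -⟩ := id h
    simp only [List.length_cons, List.length_append, List.length_nil] at hjlen
    obtain ⟨j, rfl⟩ := Nat.exists_eq_add_one_of_ne_zero (Nat.ne_zero_of_lt hij)
    have last_or_inside : j = a.length ∨ j < a.length := by omega
    rcases i with - | i
    · rcases last_or_inside with rfl | hj
      · exact Or.inl rfl
      · rw [heightAt_zero, heightAt_nest (k := j + 1) hj] at hreturn
        have := ha.heightAt_nonneg (j + 1)
        omega
    · rcases last_or_inside with rfl | hj
      · rw [ha.heightAt_nest_length, heightAt_nest (by omega)] at hreturn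
        have := ha.heightAt_nonneg i
        omega
      · exact Or.inr ⟨i, j, (isChord_nest_succ hj).1 h, rfl⟩
  · rintro (heq | ⟨i', j', h, heq⟩) <;> cases heq
    · exact ha.isChord_nest_root
    · exact (isChord_nest_succ h.2.1).2 h

theorem card_chords (hl : IsDyckWord l) : #(chords l) = l.count false := by
  induction hl using IsDyckWord.induction with
  | nil => rfl
  | nest a ha ih =>
    rw [ha.chords_nest, card_insert_of_notMem root_notMem_shiftChord_chords, card_map, ih]
    simp
  | append a b ha hb iha ihb =>
    rw [ha.chords_append, card_union_of_disjoint disjoint_chords_shiftChord, card_map, iha,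
      ihb, List.count_append]

theorem hookFormula (hl : IsDyckWord l) : HookFormula NestedIn (chords l) (cap l) := by
  induction hl using IsDyckWord.induction with
  | nil => exact HookFormula.empty
  | nest a ha ih =>
    rw [ha.chords_nest]
    refine HookFormula.insert_root (.map _ (ih.congr ?_)) root_notMem_shiftChord_chords
      (not_nestedIn_self _) nestedIn_root_of_mem_shiftChord_chords (by simp [cap])
    intro c hc
    rw [← cap_append_left [false] (fst_le_length_of_mem_chords hc)]
    exact (cap_append_shiftChord [true] (a ++ [false]) c).symm
  | append a b ha _ iha ihb =>
    have shift_injective := (shiftChord a.length).injective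
    have shifted : HookFormula NestedIn ((chords b).map (shiftChord a.length).toEmbedding)
        (Function.extend (shiftChord a.length) (cap b) 0) :=
      .map _ (by rwa [Function.extend_comp shift_injective])
    rw [ha.chords_append]
    refine HookFormula.union (iha.congr ?_) shifted ?_ disjoint_chords_shiftChord
      not_nestedIn_chords_shiftChord
    · exact fun c hc => (cap_append_left b (fst_le_length_of_mem_chords hc)).symm
    · refine forall_mem_map.2 fun c _ => ?_
      simp only [RelEmbedding.coe_toEmbedding, shift_injective.extend_apply,
        cap_append_shiftChord, ha.card_chords]

theorem hookProd_nest (ha : IsDyckWord a) :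
    hookProd NestedIn (chords (true :: (a ++ [false]))) =
      hookProd NestedIn (chords a) * qintP (a.count false + 1) := by
  rw [ha.chords_nest, hookProd_insert root_notMem_shiftChord_chords (not_nestedIn_self _)
    nestedIn_root_of_mem_shiftChord_chords, hookProd_map, card_map, ha.card_chords]

theorem hookProd_append (ha : IsDyckWord a) (b : List Bool) :
    hookProd NestedIn (chords (a ++ b)) =
      hookProd NestedIn (chords a) * hookProd NestedIn (chords b) := by
  rw [ha.chords_append, hookProd_union disjoint_chords_shiftChord
    not_nestedIn_chords_shiftChord, hookProd_map]

theorem mirror (hl : IsDyckWord l) : IsDyckWord (l.map not).reverse := by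
  induction hl using IsDyckWord.induction with
  | nil => exact nil
  | nest a ha ih => simpa using ih.nest
  | append a b ha hb iha ihb => simpa using ihb.append iha

theorem hookProd_mirror (hl : IsDyckWord l) :
    hookProd NestedIn (chords (l.map not).reverse) = hookProd NestedIn (chords l) := by
  induction hl using IsDyckWord.induction with
  | nil => rfl
  | nest a ha ih =>
    have mirror_nest : ((true :: (a ++ [false])).map not).reverse =
        true :: ((a.map not).reverse ++ [false]) := by simp
    rw [mirror_nest, ha.mirror.hookProd_nest, ha.hookProd_nest, ih, count_mirror, Bool.not_false,
      ha.1]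
  | append a b ha hb iha ihb =>
    rw [List.map_append, List.reverse_append, hb.mirror.hookProd_append, ha.hookProd_append, iha,
      ihb, mul_comm]

theorem prod_chordLen_mul_PLS (hl : IsDyckWord l) :
    (∏ c ∈ chords l, qintP (chordLen l c)) * PLS l = qfactP (l.count false) := by
  rw [← hl.card_chords, ← qAscFactP_zero_left, ← hl.hookFormula 0, PLS_eq_labellingPoly]
  rfl

end IsDyckWord

/-- Paper's Lemma `LSrev`: mirror symmetry of the LS generating polynomial.
The mirror image λ̄ of λ is obtained by reversing the word and flipping U ↔ D. -/
theorem stmt_13 (n : ℕ) (l : List Bool) (hd : IsDyckWord l) (hlen : l.length = 2 * n) :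
    PLS l = PLS ((l.map not).reverse) := by
  refine mul_left_cancel₀ (hookProd_ne_zero NestedIn (chords l)) ?_
  calc hookProd NestedIn (chords l) * PLS l
      = qfactP (l.count false) := hd.prod_chordLen_mul_PLS
    _ = qfactP ((l.map not).reverse.count false) := by rw [count_mirror, Bool.not_false, hd.1]
    _ = hookProd NestedIn (chords (l.map not).reverse) * PLS (l.map not).reverse :=
      hd.mirror.prod_chordLen_mul_PLS.symm
    _ = hookProd NestedIn (chords l) * PLS (l.map not).reverse := by rw [hd.hookProd_mirror]
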